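/- arXiv:2505.08021 — 3 statements merged into one kernel-verified Lean document; each statement's English description precedes it below -/
import Mathlib

section
/- Every GNN classifier in GNN_b^ACR with L layers all of whose aggregation and readout functions are k-bounded is invariant under ∼^∃_{L,k}, and every GNN classifier in GNN_s^ACR with L layers is invariant under ∼^∃_{L,1}: if (G1,v1) ∼^∃_{L,k} (G2,v2) (resp. ∼^∃_{L,1}) for pointed graphs, then N(G1,v1) = N(G2,v2). -/
/-!
By induction on `ℓ`, nodes related by `∼^∃_{ℓ,k}` have the same label after `ℓ` layers. In the
inductive step let `x` be a label. If Spoiler selects `min m k` of the `m` neighbours labelled `x`,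
Duplicator's reply consists of as many neighbours of the other node, and each of them is
`∼^∃_{ℓ,k}`-related to a selected one, hence labelled `x` by the induction hypothesis. By symmetry
the multiplicities of `x` in the two multisets of neighbour labels agree once capped at `k`
(`min_count_map_le`), and therefore a `k`-bounded aggregation cannot tell the multisets apart
(`KBounded.eq_of_replies`). Global rounds handle the readout in the same way.
The node's own label is covered because `∼^∃_{ℓ+1,k}` refines `∼^∃_{ℓ,k}`.
The set-based claim is the case `k = 1`.
-/

attribute [local instance] Classical.propDecidable

noncomputable section

/-! ## Multisets with capped multiplicities, and bounded aggregation functions -/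

/-- The multiset obtained from `M` by replacing every multiplicity greater than `k` by `k`. -/
def Multiset.capAt {α : Type*} (k : ℕ) (M : Multiset α) : Multiset α :=
  haveI := Classical.decEq α
  M.toFinset.val.bind fun a => Multiset.replicate (min (M.count a) k) a

/-- A function on multisets is `k`-bounded if its value on any multiset agrees with its value
on the multiset with all multiplicities capped at `k`. -/
def KBounded {α β : Type*} (k : ℕ) (f : Multiset α → β) : Prop :=
  ∀ M : Multiset α, f M = f (M.capAt k)

/-- A function on multisets is bounded if it is `k`-bounded for some `k`;
it is set-based if it is `1`-bounded. -/
def BoundedAgg {α β : Type*} (f : Multiset α → β) : Prop :=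
  ∃ k : ℕ, KBounded k f

/-! ## Finite undirected simple node-labelled graphs -/

structure LGraph (d : ℕ) where
  n : ℕ
  adj : Fin n → Fin n → Prop
  symm : ∀ u v, adj u v → adj v u
  irrefl : ∀ v, ¬ adj v v
  label : Fin n → Fin d → Bool

/-- The neighbours of a node. -/
def LGraph.nbrs {d : ℕ} (G : LGraph d) (v : Fin G.n) : Finset (Fin G.n) :=
  Finset.univ.filter fun w => G.adj v w

/-- The non-neighbours of a node (excluding the node itself). -/
def LGraph.conbrs {d : ℕ} (G : LGraph d) (v : Fin G.n) : Finset (Fin G.n) :=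
  Finset.univ.filter fun w => ¬ G.adj v w ∧ w ≠ v

/-! ## GNN classifiers -/

/-- The kind of the layers of a GNN: aggregate-combine (`AC`),
aggregate-combine-readout (`ACR`), or extended aggregate-combine (`ACP`, i.e. `AC+`). -/
inductive GNNKind : Type
  | AC | ACR | ACP

/-- A GNN layer from dimension `din` to dimension `dout`: an aggregation function `agg`
(over neighbours), an auxiliary aggregation/readout function `aux` (fed the empty multiset in
`AC` layers, the multiset of all node labels in `ACR` layers, and the multiset of labels of
non-neighbours in `AC+` layers), and a combination function `comb`. -/
structure GNNLayer (din dout : ℕ) where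
  m₁ : ℕ
  m₂ : ℕ
  agg : Multiset (Fin din → ℝ) → Fin m₁ → ℝ
  aux : Multiset (Fin din → ℝ) → Fin m₂ → ℝ
  comb : (Fin din → ℝ) → (Fin m₁ → ℝ) → (Fin m₂ → ℝ) → Fin dout → ℝ

/-- A GNN classifier of dimension `d` with `L` layers of matching dimensions and a
classification function `cls`. -/
structure GNN (d : ℕ) where
  kind : GNNKind
  L : ℕ
  dims : ℕ → ℕ
  dims_zero : dims 0 = d
  layer : (ℓ : ℕ) → ℓ < L → GNNLayer (dims ℓ) (dims (ℓ + 1))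
  cls : (Fin (dims L) → ℝ) → Bool

/-- The set of nodes whose labels are fed to the second aggregation function `aux`. -/
def GNN.auxSet {d : ℕ} (N : GNN d) (G : LGraph d) (v : Fin G.n) : Finset (Fin G.n) :=
  match N.kind with
  | GNNKind.AC => ∅
  | GNNKind.ACR => Finset.univ
  | GNNKind.ACP => G.conbrs v

/-- The labelling of the nodes of `G` after `ℓ` layers of `N` have been applied. -/
def GNN.labelAt {d : ℕ} (N : GNN d) (G : LGraph d) : (ℓ : ℕ) → Fin G.n → Fin (N.dims ℓ) → ℝ
  | 0 => fun v i => if G.label v (Fin.cast N.dims_zero i) = true then 1 else 0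
  | ℓ + 1 => fun v =>
      if h : ℓ < N.L then
        (N.layer ℓ h).comb (N.labelAt G ℓ v)
          ((N.layer ℓ h).agg ((G.nbrs v).val.map fun w => N.labelAt G ℓ w))
          ((N.layer ℓ h).aux ((N.auxSet G v).val.map fun w => N.labelAt G ℓ w))
      else fun _ => 0

/-- The output of the GNN classifier `N` on the pointed graph `(G, v)`. -/
def GNN.eval {d : ℕ} (N : GNN d) (G : LGraph d) (v : Fin G.n) : Bool :=
  N.cls (N.labelAt G N.L v)

/-- The spectrum of `N` at layer `ℓ`: by convention, at layer `0` it is the set of Boolean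
vectors of the dimension of `N`; at layer `ℓ + 1` it is the set of vectors that can occur as
node labels upon application of layer `ℓ + 1` in applications of `N` to graphs. -/
def GNN.spec {d : ℕ} (N : GNN d) : (ℓ : ℕ) → Set (Fin (N.dims ℓ) → ℝ)
  | 0 => {x | ∀ i, x i = 0 ∨ x i = 1}
  | ℓ + 1 => {x | ∃ (G : LGraph d) (v : Fin G.n), N.labelAt G (ℓ + 1) v = x}

/-! ## Modal formulas (GMLC and its fragments GML, ML(E), ML) -/

inductive MForm (d : ℕ) : Type
  | prop : Fin d → MForm d
  | neg : MForm d → MForm d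
  | and : MForm d → MForm d → MForm d
  | dia : ℕ → MForm d → MForm d
  | glob : ℕ → MForm d → MForm d

namespace MForm

/-- Modal depth. -/
def depth {d : ℕ} : MForm d → ℕ
  | prop _ => 0
  | neg φ => depth φ
  | and φ ψ => max (depth φ) (depth ψ)
  | dia _ φ => depth φ + 1
  | glob _ φ => depth φ + 1

/-- Counting rank. -/
def rank {d : ℕ} : MForm d → ℕ
  | prop _ => 0
  | neg φ => rank φ
  | and φ ψ => max (rank φ) (rank ψ)
  | dia k φ => max k (rank φ)
  | glob k φ => max k (rank φ)

/-- Graded modal logic: no global modalities, grades are positive. -/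
def IsGML {d : ℕ} : MForm d → Prop
  | prop _ => True
  | neg φ => IsGML φ
  | and φ ψ => IsGML φ ∧ IsGML ψ
  | dia k φ => 1 ≤ k ∧ IsGML φ
  | glob _ _ => False

/-- Basic modal logic: no global modalities, all graded modalities are `◇₁`. -/
def IsML {d : ℕ} : MForm d → Prop
  | prop _ => True
  | neg φ => IsML φ
  | and φ ψ => IsML φ ∧ IsML ψ
  | dia k φ => k = 1 ∧ IsML φ
  | glob _ _ => False

/-- Graded modal logic with counting: grades are positive. -/
def IsGMLC {d : ℕ} : MForm d → Prop
  | prop _ => True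
  | neg φ => IsGMLC φ
  | and φ ψ => IsGMLC φ ∧ IsGMLC ψ
  | dia k φ => 1 ≤ k ∧ IsGMLC φ
  | glob k φ => 1 ≤ k ∧ IsGMLC φ

/-- Modal logic with the global modality: all modalities are `◇₁` or `∃₁`. -/
def IsMLE {d : ℕ} : MForm d → Prop
  | prop _ => True
  | neg φ => IsMLE φ
  | and φ ψ => IsMLE φ ∧ IsMLE ψ
  | dia k φ => k = 1 ∧ IsMLE φ
  | glob k φ => k = 1 ∧ IsMLE φ

/-- A tautology (needs a proposition to exist). -/
def top {d : ℕ} (hd : 0 < d) : MForm d :=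
  neg (and (prop ⟨0, hd⟩) (neg (prop ⟨0, hd⟩)))

/-- Conjunction of a list of formulas (the empty conjunction is a tautology). -/
def conjList {d : ℕ} (hd : 0 < d) : List (MForm d) → MForm d
  | [] => top hd
  | [φ] => φ
  | φ :: ψ :: rest => and φ (conjList hd (ψ :: rest))

end MForm

/-! ## Finite pointed Kripke models -/

structure KModel (d : ℕ) where
  W : Type
  fintype : Fintype W
  R : W → W → Prop
  symm : ∀ u v, R u v → R v u
  irrefl : ∀ v, ¬ R v v
  val : W → Fin d → Prop

/-- Satisfaction of modal formulas. -/
def KModel.sat {d : ℕ} (M : KModel d) : M.W → MForm d → Prop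
  | v, MForm.prop p => M.val v p
  | v, MForm.neg φ => ¬ M.sat v φ
  | v, MForm.and φ ψ => M.sat v φ ∧ M.sat v ψ
  | v, MForm.dia k φ => k ≤ Nat.card {w : M.W // M.R v w ∧ M.sat w φ}
  | v, MForm.glob k φ => k ≤ Nat.card {w : M.W // M.sat w φ}

/-- A list enumerating the worlds of a finite Kripke model. -/
def KModel.worldList {d : ℕ} (M : KModel d) : List M.W :=
  haveI := M.fintype
  Finset.univ.toList

/-- The Kripke model associated with a node-labelled graph. -/
def LGraph.toKModel {d : ℕ} (G : LGraph d) : KModel d where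
  W := Fin G.n
  fintype := inferInstance
  R := G.adj
  symm := G.symm
  irrefl := G.irrefl
  val := fun v p => G.label v p = true

/-! ## Graded bisimulation games -/

/-- `GBisim c ℓ M v M' v'` holds iff Duplicator has a winning strategy in the `ℓ`-round
`c`-graded bisimulation game starting from configuration `(M, v, M', v')`. -/
def GBisim {d : ℕ} (c : ℕ) : (ℓ : ℕ) → (M : KModel d) → M.W → (M' : KModel d) → M'.W → Prop
  | 0, M, v, M', v' => ∀ p, M.val v p ↔ M'.val v' p
  | ℓ + 1, M, v, M', v' =>
      (∀ p, M.val v p ↔ M'.val v' p) ∧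
      (∀ U₁ : Finset M.W, U₁.Nonempty → U₁.card ≤ c → (∀ u ∈ U₁, M.R v u) →
        ∃ U₂ : Finset M'.W, U₂.card = U₁.card ∧ (∀ u ∈ U₂, M'.R v' u) ∧
          ∀ u₂ ∈ U₂, ∃ u₁ ∈ U₁, GBisim c ℓ M u₁ M' u₂) ∧
      (∀ U₁ : Finset M'.W, U₁.Nonempty → U₁.card ≤ c → (∀ u ∈ U₁, M'.R v' u) →
        ∃ U₂ : Finset M.W, U₂.card = U₁.card ∧ (∀ u ∈ U₂, M.R v u) ∧
          ∀ u₂ ∈ U₂, ∃ u₁ ∈ U₁, GBisim c ℓ M u₂ M' u₁)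

/-- `GBisimG c ℓ M v M' v'` holds iff Duplicator has a winning strategy in the `ℓ`-round
`c`-graded *global* bisimulation game starting from configuration `(M, v, M', v')`:
Spoiler may additionally play global rounds, selecting worlds anywhere in one model. -/
def GBisimG {d : ℕ} (c : ℕ) : (ℓ : ℕ) → (M : KModel d) → M.W → (M' : KModel d) → M'.W → Prop
  | 0, M, v, M', v' => ∀ p, M.val v p ↔ M'.val v' p
  | ℓ + 1, M, v, M', v' =>
      (∀ p, M.val v p ↔ M'.val v' p) ∧
      (∀ U₁ : Finset M.W, U₁.Nonempty → U₁.card ≤ c → (∀ u ∈ U₁, M.R v u) →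
        ∃ U₂ : Finset M'.W, U₂.card = U₁.card ∧ (∀ u ∈ U₂, M'.R v' u) ∧
          ∀ u₂ ∈ U₂, ∃ u₁ ∈ U₁, GBisimG c ℓ M u₁ M' u₂) ∧
      (∀ U₁ : Finset M'.W, U₁.Nonempty → U₁.card ≤ c → (∀ u ∈ U₁, M'.R v' u) →
        ∃ U₂ : Finset M.W, U₂.card = U₁.card ∧ (∀ u ∈ U₂, M.R v u) ∧
          ∀ u₂ ∈ U₂, ∃ u₁ ∈ U₁, GBisimG c ℓ M u₂ M' u₁) ∧
      (∀ U₁ : Finset M.W, U₁.Nonempty → U₁.card ≤ c →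
        ∃ U₂ : Finset M'.W, U₂.card = U₁.card ∧
          ∀ u₂ ∈ U₂, ∃ u₁ ∈ U₁, GBisimG c ℓ M u₁ M' u₂) ∧
      (∀ U₁ : Finset M'.W, U₁.Nonempty → U₁.card ≤ c →
        ∃ U₂ : Finset M.W, U₂.card = U₁.card ∧
          ∀ u₂ ∈ U₂, ∃ u₁ ∈ U₁, GBisimG c ℓ M u₂ M' u₁)

/-! ## Characteristic formulas -/

/-- The conjunction of all propositions true at `v` and of the negations of all
propositions false at `v`. -/
def atomDesc {d : ℕ} (hd : 0 < d) (M : KModel d) (v : M.W) : MForm d :=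
  MForm.conjList hd ((List.finRange d).map fun p =>
    if M.val v p then MForm.prop p else MForm.neg (MForm.prop p))

/-- `|U^n_{v,w}|`: the number of neighbours `u` of `v` with `(M,u) ∼_{n,c} (M,w)`. -/
def USet {d : ℕ} (c n : ℕ) (M : KModel d) (v w : M.W) : ℕ :=
  Nat.card {u : M.W // M.R v u ∧ GBisim c n M u M w}

/-- The characteristic formula `φ^{ℓ,c}_{[M,v]}` of a finite pointed Kripke model for GML. -/
def charF {d : ℕ} (hd : 0 < d) (c : ℕ) (M : KModel d) : ℕ → M.W → MForm d
  | 0, v => atomDesc hd M v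
  | n + 1, v =>
      MForm.conjList hd
        ([atomDesc hd M v] ++
         ((M.worldList.filter fun w => decide (M.R v w)).flatMap fun w =>
            ((List.range c).map (· + 1)).filterMap fun k =>
              if k ≤ min (USet c n M v w) c then some (MForm.dia k (charF hd c M n w))
              else none) ++
         ((M.worldList.filter fun w => decide (M.R v w)).flatMap fun w =>
            ((List.range c).map (· + 1)).filterMap fun k =>
              if USet c n M v w < k ∧ k ≤ c then
                some (MForm.neg (MForm.dia k (charF hd c M n w)))
              else none) ++
         [MForm.neg (MForm.dia 1 (MForm.conjList hd
            ((M.worldList.filter fun w => decide (M.R v w)).map fun w =>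
              MForm.neg (charF hd c M n w))))])

/-- `|U^n_{v,w}|` for the global game. -/
def USetG {d : ℕ} (c n : ℕ) (M : KModel d) (v w : M.W) : ℕ :=
  Nat.card {u : M.W // M.R v u ∧ GBisimG c n M u M w}

/-- `|J^n_w|`: the number of worlds `u` with `(M,u) ∼^∃_{n,c} (M,w)`. -/
def JSetG {d : ℕ} (c n : ℕ) (M : KModel d) (w : M.W) : ℕ :=
  Nat.card {u : M.W // GBisimG c n M u M w}

/-- The global characteristic formula `φ^{ℓ,c}_{∃[M,v]}` for GMLC. -/
def charG {d : ℕ} (hd : 0 < d) (c : ℕ) (M : KModel d) : ℕ → M.W → MForm d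
  | 0, v => atomDesc hd M v
  | n + 1, v =>
      MForm.conjList hd
        ([atomDesc hd M v] ++
         ((M.worldList.filter fun w => decide (M.R v w)).flatMap fun w =>
            ((List.range c).map (· + 1)).filterMap fun k =>
              if k ≤ min (USetG c n M v w) c then some (MForm.dia k (charG hd c M n w))
              else none) ++
         ((M.worldList.filter fun w => decide (M.R v w)).flatMap fun w =>
            ((List.range c).map (· + 1)).filterMap fun k =>
              if USetG c n M v w < k ∧ k ≤ c then
                some (MForm.neg (MForm.dia k (charG hd c M n w)))
              else none) ++
         (M.worldList.flatMap fun w =>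
            ((List.range c).map (· + 1)).filterMap fun k =>
              if k ≤ min (JSetG c n M w) c then some (MForm.glob k (charG hd c M n w))
              else none) ++
         (M.worldList.flatMap fun w =>
            ((List.range c).map (· + 1)).filterMap fun k =>
              if JSetG c n M w < k ∧ k ≤ c then
                some (MForm.neg (MForm.glob k (charG hd c M n w)))
              else none) ++
         [MForm.neg (MForm.dia 1 (MForm.conjList hd
            ((M.worldList.filter fun w => decide (M.R v w)).map fun w =>
              MForm.neg (charG hd c M n w)))),
          MForm.neg (MForm.glob 1 (MForm.conjList hd
            (M.worldList.map fun w => MForm.neg (charG hd c M n w))))])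

/-! ## Two-variable first-order logic with counting quantifiers (C²) -/

/-- C² formulas over unary predicates `p₁, …, p_d` and one binary relation `E`, with the two
variables represented by `Bool` (`false` is the distinguished free variable `x`). -/
inductive C2Form (d : ℕ) : Type
  | prop : Fin d → Bool → C2Form d
  | edge : Bool → Bool → C2Form d
  | eq : Bool → Bool → C2Form d
  | neg : C2Form d → C2Form d
  | and : C2Form d → C2Form d → C2Form d
  | exC : ℕ → Bool → C2Form d → C2Form d

namespace C2Form

/-- Quantifier depth. -/
def depth {d : ℕ} : C2Form d → ℕ
  | prop _ _ => 0
  | edge _ _ => 0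
  | eq _ _ => 0
  | neg φ => depth φ
  | and φ ψ => max (depth φ) (depth ψ)
  | exC _ _ φ => depth φ + 1

/-- Counting rank. -/
def rank {d : ℕ} : C2Form d → ℕ
  | prop _ _ => 0
  | edge _ _ => 0
  | eq _ _ => 0
  | neg φ => rank φ
  | and φ ψ => max (rank φ) (rank ψ)
  | exC k _ φ => max k (rank φ)

/-- Well-formed C² formulas: all counting indices are positive. -/
def IsC2 {d : ℕ} : C2Form d → Prop
  | prop _ _ => True
  | edge _ _ => True
  | eq _ _ => True
  | neg φ => IsC2 φ
  | and φ ψ => IsC2 φ ∧ IsC2 ψ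
  | exC k _ φ => 1 ≤ k ∧ IsC2 φ

/-- FO² formulas: all counting quantifiers are with `k = 1`, i.e. ordinary `∃`. -/
def IsFO2 {d : ℕ} : C2Form d → Prop
  | prop _ _ => True
  | edge _ _ => True
  | eq _ _ => True
  | neg φ => IsFO2 φ
  | and φ ψ => IsFO2 φ ∧ IsFO2 ψ
  | exC k _ φ => k = 1 ∧ IsFO2 φ

/-- The set of free variables of a formula. -/
def free {d : ℕ} : C2Form d → Set Bool
  | prop _ b => {b}
  | edge b₁ b₂ => {b₁, b₂}
  | eq b₁ b₂ => {b₁, b₂}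
  | neg φ => free φ
  | and φ ψ => free φ ∪ free ψ
  | exC _ b φ => free φ \ {b}

end C2Form

/-- A finite first-order structure over the signature with unary predicates `p₁, …, p_d`
and one binary relation `E`. -/
structure FOModel (d : ℕ) where
  W : Type
  fintype : Fintype W
  E : W → W → Prop
  val : W → Fin d → Prop

/-- First-order satisfaction of C² formulas under an assignment of the two variables. -/
def FOModel.sat {d : ℕ} (M : FOModel d) : (Bool → M.W) → C2Form d → Prop
  | a, C2Form.prop p b => M.val (a b) p
  | a, C2Form.edge b₁ b₂ => M.E (a b₁) (a b₂)
  | a, C2Form.eq b₁ b₂ => a b₁ = a b₂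
  | a, C2Form.neg φ => ¬ M.sat a φ
  | a, C2Form.and φ ψ => M.sat a φ ∧ M.sat a ψ
  | a, C2Form.exC k b φ => k ≤ Nat.card {w : M.W // M.sat (Function.update a b w) φ}

/-- The first-order structure associated with a node-labelled graph. -/
def LGraph.toFOModel {d : ℕ} (G : LGraph d) : FOModel d where
  W := Fin G.n
  fintype := inferInstance
  E := G.adj
  val := fun v p => G.label v p = true

/-! ## Two-pebble graded games -/

/-- The positions of the pebbles (pair 1 placed, pair 2 possibly unplaced) form a partial
isomorphism between `M` and `M'`. -/
def PIso {d : ℕ} (M M' : FOModel d) (p₁ : M.W × M'.W) (p₂ : Option (M.W × M'.W)) : Prop :=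
  ((∀ q, M.val p₁.1 q ↔ M'.val p₁.2 q) ∧ (M.E p₁.1 p₁.1 ↔ M'.E p₁.2 p₁.2)) ∧
  ∀ x ∈ p₂,
    (∀ q, M.val x.1 q ↔ M'.val x.2 q) ∧ (M.E x.1 x.1 ↔ M'.E x.2 x.2) ∧
    (p₁.1 = x.1 ↔ p₁.2 = x.2) ∧
    (M.E p₁.1 x.1 ↔ M'.E p₁.2 x.2) ∧ (M.E x.1 p₁.1 ↔ M'.E x.2 p₁.2)

/-- Update the configuration by moving pebble pair `i` (`false` = pair 1, `true` = pair 2)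
to the given pair of worlds. -/
def updCfg {α β : Type*} (p₁ : α × β) (p₂ : Option (α × β)) :
    Bool → α × β → (α × β) × Option (α × β)
  | false, x => (x, p₂)
  | true, x => (p₁, some x)

/-- `PebbleWin c M M' ℓ p₁ p₂` holds iff Duplicator has a winning strategy in the 2-pebble
`ℓ`-round `c`-graded game from the configuration with pebble pair 1 on `p₁` and pebble pair 2
on `p₂` (if placed): she can ensure that the pebble positions always form a partial
isomorphism. -/
def PebbleWin {d : ℕ} (c : ℕ) (M M' : FOModel d) :
    (ℓ : ℕ) → M.W × M'.W → Option (M.W × M'.W) → Prop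
  | 0, p₁, p₂ => PIso M M' p₁ p₂
  | ℓ + 1, p₁, p₂ =>
      PIso M M' p₁ p₂ ∧
      ∀ i : Bool,
        (∀ U : Finset M.W, U.Nonempty → U.card ≤ c →
          ∃ U' : Finset M'.W, U'.card = U.card ∧
            ∀ u' ∈ U', ∃ u ∈ U,
              PebbleWin c M M' ℓ (updCfg p₁ p₂ i (u, u')).1 (updCfg p₁ p₂ i (u, u')).2) ∧
        (∀ U : Finset M'.W, U.Nonempty → U.card ≤ c →
          ∃ U' : Finset M.W, U'.card = U.card ∧
            ∀ u ∈ U', ∃ u' ∈ U,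
              PebbleWin c M M' ℓ (updCfg p₁ p₂ i (u, u')).1 (updCfg p₁ p₂ i (u, u')).2)

end

/-! ### Capped multiplicities and replies to a selection -/

theorem Multiset.count_capAt {α : Type*} [DecidableEq α] (k : ℕ) (M : Multiset α) (a : α) :
    (M.capAt k).count a = min (M.count a) k := by
  obtain rfl : ‹DecidableEq α› = Classical.decEq α := Subsingleton.elim _ _
  unfold Multiset.capAt
  rw [Multiset.count_bind]
  change ∑ b ∈ M.toFinset, _ = _
  simp only [Multiset.count_replicate]
  rw [Finset.sum_ite_eq']
  by_cases h : a ∈ M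
  · simp [h]
  · simp [h]

/-- If every nonempty selection of at most `k` elements of `S` is answered by an equally large subset of
`T` whose values under `g` all occur as values of `f` on the selection, then `T` carries each value
at least as often as `S` does, up to the cap `k`. -/
theorem min_count_map_le {α β γ : Type*} [DecidableEq γ] (k : ℕ) (S : Finset α) (T : Finset β)
    (f : α → γ) (g : β → γ)
    (H : ∀ U : Finset α, U.Nonempty → U.card ≤ k → (∀ u ∈ U, u ∈ S) →
      ∃ U' : Finset β, U'.card = U.card ∧ (∀ u ∈ U', u ∈ T) ∧
        ∀ u' ∈ U', ∃ u ∈ U, f u = g u') (x : γ) :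
    min ((S.val.map f).count x) k ≤ (T.val.map g).count x := by
  simp only [Multiset.count_map]
  change min (S.filter fun a => x = f a).card k ≤ (T.filter fun b => x = g b).card
  obtain ⟨U, hUS, hU⟩ := Finset.exists_subset_card_eq
    (min_le_left (S.filter fun a => x = f a).card k)
  rw [← hU]
  rcases U.eq_empty_or_nonempty with rfl | hne
  · simp
  obtain ⟨U', hc, hT, hfg⟩ := H U hne (hU ▸ min_le_right _ _)
    fun u hu => (Finset.mem_filter.1 (hUS hu)).1
  rw [← hc]
  refine Finset.card_le_card fun u' hu' => Finset.mem_filter.2 ⟨hT u' hu', ?_⟩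
  obtain ⟨u, hu, he⟩ := hfg u' hu'
  rw [← he]
  exact (Finset.mem_filter.1 (hUS hu)).2

theorem KBounded.eq_of_replies {α β γ δ : Type*} {k : ℕ} {F : Multiset γ → δ} (hF : KBounded k F)
    (S : Finset α) (T : Finset β) (f : α → γ) (g : β → γ)
    (H₁ : ∀ U : Finset α, U.Nonempty → U.card ≤ k → (∀ u ∈ U, u ∈ S) →
      ∃ U' : Finset β, U'.card = U.card ∧ (∀ u ∈ U', u ∈ T) ∧
        ∀ u' ∈ U', ∃ u ∈ U, f u = g u')
    (H₂ : ∀ U : Finset β, U.Nonempty → U.card ≤ k → (∀ u ∈ U, u ∈ T) →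
      ∃ U' : Finset α, U'.card = U.card ∧ (∀ u ∈ U', u ∈ S) ∧
        ∀ u' ∈ U', ∃ u ∈ U, g u = f u') :
    F (S.val.map f) = F (T.val.map g) := by
  classical
  rw [hF (S.val.map f), hF (T.val.map g)]
  congr 1
  ext x
  rw [Multiset.count_capAt, Multiset.count_capAt]
  have h₁ := min_count_map_le k S T f g H₁ x
  have h₂ := min_count_map_le k T S g f H₂ x
  omega

/-! ### Invariance of node labels under the global game -/

/-- Duplicator can also survive a game with one round fewer. -/
theorem GBisimG.of_succ {d c : ℕ} {M M' : KModel d} :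
    ∀ {ℓ : ℕ} {v : M.W} {v' : M'.W}, GBisimG c (ℓ + 1) M v M' v' → GBisimG c ℓ M v M' v'
  | 0, _, _, h => h.1
  | ℓ + 1, v, v', h => by
    obtain ⟨h0, h1, h2, h3, h4⟩ := h
    refine ⟨h0, fun U hne hc hR => ?_, fun U hne hc hR => ?_, fun U hne hc => ?_,
      fun U hne hc => ?_⟩
    · obtain ⟨U', e, r, b⟩ := h1 U hne hc hR
      exact ⟨U', e, r, fun u' hu' => let ⟨u, hu, hb⟩ := b u' hu'; ⟨u, hu, hb.of_succ⟩⟩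
    · obtain ⟨U', e, r, b⟩ := h2 U hne hc hR
      exact ⟨U', e, r, fun u' hu' => let ⟨u, hu, hb⟩ := b u' hu'; ⟨u, hu, hb.of_succ⟩⟩
    · obtain ⟨U', e, b⟩ := h3 U hne hc
      exact ⟨U', e, fun u' hu' => let ⟨u, hu, hb⟩ := b u' hu'; ⟨u, hu, hb.of_succ⟩⟩
    · obtain ⟨U', e, b⟩ := h4 U hne hc
      exact ⟨U', e, fun u' hu' => let ⟨u, hu, hb⟩ := b u' hu'; ⟨u, hu, hb.of_succ⟩⟩

theorem GNN.labelAt_eq_of_gBisimG {d : ℕ} (N : GNN d) (hN : N.kind = GNNKind.ACR) (k : ℕ)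
    (hk : ∀ (ℓ : ℕ) (h : ℓ < N.L), KBounded k (N.layer ℓ h).agg ∧ KBounded k (N.layer ℓ h).aux)
    (G₁ G₂ : LGraph d) : ∀ (ℓ : ℕ) (v₁ : Fin G₁.n) (v₂ : Fin G₂.n),
      GBisimG k ℓ G₁.toKModel v₁ G₂.toKModel v₂ → N.labelAt G₁ ℓ v₁ = N.labelAt G₂ ℓ v₂ := by
  intro ℓ
  induction ℓ with
  | zero =>
    intro v₁ v₂ h
    funext i
    have hi : G₁.label v₁ (Fin.cast N.dims_zero i) = true ↔
        G₂.label v₂ (Fin.cast N.dims_zero i) = true := h _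
    simp only [GNN.labelAt, hi]
  | succ ℓ ih =>
    intro v₁ v₂ h
    have hv := ih v₁ v₂ h.of_succ
    obtain ⟨-, h1, h2, h3, h4⟩ := h
    have mem_nbrs : ∀ (G : LGraph d) (v w : Fin G.n), w ∈ G.nbrs v ↔ G.adj v w := by
      intro G v w
      simp [LGraph.nbrs]
    have aux_univ : ∀ (G : LGraph d) (v : Fin G.n), N.auxSet G v = Finset.univ := by
      intro G v
      simp [GNN.auxSet, hN]
    simp only [GNN.labelAt, aux_univ]
    split_ifs with hL
    · congr 1
      · refine (hk ℓ hL).1.eq_of_replies _ _ _ _ (fun U hne hc hU => ?_) fun U hne hc hU => ?_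
        · obtain ⟨U', e, r, b⟩ := h1 U hne hc fun u hu => (mem_nbrs _ _ _).1 (hU u hu)
          exact ⟨U', e, fun u hu => (mem_nbrs _ _ _).2 (r u hu), fun u' hu' =>
            let ⟨u, hu, hb⟩ := b u' hu'; ⟨u, hu, ih u u' hb⟩⟩
        · obtain ⟨U', e, r, b⟩ := h2 U hne hc fun u hu => (mem_nbrs _ _ _).1 (hU u hu)
          exact ⟨U', e, fun u hu => (mem_nbrs _ _ _).2 (r u hu), fun u' hu' =>
            let ⟨u, hu, hb⟩ := b u' hu'; ⟨u, hu, (ih u' u hb).symm⟩⟩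
      · refine (hk ℓ hL).2.eq_of_replies _ _ _ _ (fun U hne hc _ => ?_) fun U hne hc _ => ?_
        · obtain ⟨U', e, b⟩ := h3 U hne hc
          exact ⟨U', e, fun u _ => Finset.mem_univ _, fun u' hu' =>
            let ⟨u, hu, hb⟩ := b u' hu'; ⟨u, hu, ih u u' hb⟩⟩
        · obtain ⟨U', e, b⟩ := h4 U hne hc
          exact ⟨U', e, fun u _ => Finset.mem_univ _, fun u' hu' =>
            let ⟨u, hu, hb⟩ := b u' hu'; ⟨u, hu, (ih u' u hb).symm⟩⟩
    · rfl

/-- Every GNN classifier in `GNN_b^ACR` with `L` layers all of whose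
aggregation and readout functions are `k`-bounded is invariant under `∼^∃_{L,k}`, and every
GNN classifier in `GNN_s^ACR` with `L` layers is invariant under `∼^∃_{L,1}`. -/
theorem gnn_acr_invariant :
    ∀ (d : ℕ) (N : GNN d), N.kind = GNNKind.ACR →
      (∀ k : ℕ,
        (∀ (ℓ : ℕ) (h : ℓ < N.L),
          KBounded k (N.layer ℓ h).agg ∧ KBounded k (N.layer ℓ h).aux) →
        ∀ (G₁ G₂ : LGraph d) (v₁ : Fin G₁.n) (v₂ : Fin G₂.n),
          GBisimG k N.L (LGraph.toKModel G₁) v₁ (LGraph.toKModel G₂) v₂ →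
          N.eval G₁ v₁ = N.eval G₂ v₂) ∧
      ((∀ (ℓ : ℕ) (h : ℓ < N.L),
          KBounded 1 (N.layer ℓ h).agg ∧ KBounded 1 (N.layer ℓ h).aux) →
        ∀ (G₁ G₂ : LGraph d) (v₁ : Fin G₁.n) (v₂ : Fin G₂.n),
          GBisimG 1 N.L (LGraph.toKModel G₁) v₁ (LGraph.toKModel G₂) v₂ →
          N.eval G₁ v₁ = N.eval G₂ v₂) := by
  intro d N hN
  have main := fun k hk G₁ G₂ v₁ v₂ h =>
    congrArg N.cls (N.labelAt_eq_of_gBisimG hN k hk G₁ G₂ N.L v₁ v₂ h)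
  exact ⟨main, main 1⟩
end

section
/- FO2 ≤ GNN_s^AC+: for every FO2 classifier φ(x) of dimension d there exists a GNN classifier N_φ in GNN_s^AC+ of dimension d such that for every pointed graph (G,v) of dimension d, N_φ(G,v) = true if and only if M_G ⊨ φ(v). -/
/-!
Aggregation and combination functions are arbitrary, so a single network architecture suffices:
set-based colour refinement with neighbours and non-neighbours. Each layer replaces the label of
a node by an injective real code of the triple consisting of its old label, the set of labels of
its neighbours, and the set of labels of its non-neighbours; such codes exist because finite sets
of real vectors have cardinality at most that of `ℝ`.

After `L` layers the label of a node determines the truth at that node of every FO² formula of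
quantifier depth at most `L` (`refine_sat_iff`). This is the usual two-pebble argument: suppose
two pairs of nodes agree on equality, on adjacency and on their labels after `ℓ + 1` layers. When
one pebble is moved to `w`, the node `w` is equal to, a neighbour of, or a non-neighbour of the
other pebble, and the matching component of the code supplies an answer in the other graph
(`refine_response`). The classification function then accepts exactly the labels realised by some
pointed graph satisfying the formula.
-/

attribute [local instance] Classical.propDecidable

/-! ### Injective real codes of finite sets of labels -/

theorem mem_capAt_one {α : Type*} (M : Multiset α) (a : α) : a ∈ M.capAt 1 ↔ a ∈ M := by
  classical
  unfold Multiset.capAt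
  simp only [Multiset.mem_bind, Finset.mem_val, Multiset.mem_toFinset, Multiset.mem_replicate]
  constructor
  · rintro ⟨b, hb, -, rfl⟩
    exact hb
  · intro ha
    refine ⟨a, ha, ?_, rfl⟩
    have := Multiset.count_pos.2 ha
    intro h0
    rw [Nat.min_eq_zero_iff] at h0
    rcases h0 with h0 | h0
    · exact (Multiset.count_ne_zero.2 ha) (by convert h0)
    · exact one_ne_zero h0

theorem mk_fin_fun_real_le (n : ℕ) : Cardinal.mk (Fin n → ℝ) ≤ Cardinal.continuum := by
  have h : Cardinal.mk (Fin n → ℝ) = Cardinal.continuum ^ n := by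
    simp [Cardinal.mk_real]
  rw [h]
  exact (Cardinal.power_nat_le Cardinal.aleph0_le_continuum)

theorem exists_setCode (n : ℕ) : Nonempty (Finset (Fin n → ℝ) ↪ (Fin 1 → ℝ)) := by
  have h1 : Cardinal.mk (Finset (Fin n → ℝ)) ≤ Cardinal.mk (List (Fin n → ℝ)) :=
    Cardinal.mk_le_of_injective (f := Finset.toList) fun s t h => by
      rw [← Finset.toList_toFinset s, ← Finset.toList_toFinset t, h]
  have h2 : Cardinal.mk (List (Fin n → ℝ)) ≤ Cardinal.continuum :=
    (Cardinal.mk_list_le_max _).trans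
      (max_le Cardinal.aleph0_le_continuum (mk_fin_fun_real_le n))
  have h3 : Cardinal.mk (Fin 1 → ℝ) = Cardinal.continuum := by simp [Cardinal.mk_real]
  rw [← h3] at h2
  exact Cardinal.le_def _ _ |>.1 (h1.trans h2)

theorem exists_tripleCode (n : ℕ) :
    Nonempty ((Fin n → ℝ) × (Fin 1 → ℝ) × (Fin 1 → ℝ) ↪ (Fin 1 → ℝ)) := by
  have h3 : Cardinal.mk (Fin 1 → ℝ) = Cardinal.continuum := by simp [Cardinal.mk_real]
  refine Cardinal.le_def _ _ |>.1 ?_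
  rw [← Cardinal.mul_def, ← Cardinal.mul_def, h3, Cardinal.continuum_mul_self]
  exact (mul_le_mul_left (mk_fin_fun_real_le n) _).trans Cardinal.continuum_mul_self.le

/-- A chosen injective code of finite sets of real vectors by one-dimensional vectors. -/
noncomputable def setCode (n : ℕ) : Finset (Fin n → ℝ) ↪ (Fin 1 → ℝ) :=
  (exists_setCode n).some

/-- A chosen injective code of an old label together with two aggregated values. -/
noncomputable def tripleCode (n : ℕ) :
    (Fin n → ℝ) × (Fin 1 → ℝ) × (Fin 1 → ℝ) ↪ (Fin 1 → ℝ) :=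
  (exists_tripleCode n).some

/-- The injective code of the underlying set of a multiset of labels. -/
noncomputable def setAgg (n : ℕ) (M : Multiset (Fin n → ℝ)) : Fin 1 → ℝ :=
  setCode n M.toFinset

theorem setAgg_eq_iff {n : ℕ} {M M' : Multiset (Fin n → ℝ)} :
    setAgg n M = setAgg n M' ↔ ∀ x, x ∈ M ↔ x ∈ M' := by
  simp [setAgg, Finset.ext_iff]

theorem kBounded_setAgg (n : ℕ) : KBounded 1 (setAgg n) := fun M =>
  setAgg_eq_iff.2 fun x => (mem_capAt_one M x).symm

/-! ### The refinement network -/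

/-- One round of set-based colour refinement. -/
noncomputable def refineLayer (n : ℕ) : GNNLayer n 1 where
  m₁ := 1
  m₂ := 1
  agg := setAgg n
  aux := setAgg n
  comb := fun x y z => tripleCode n (x, y, z)

/-- The dimensions of the refinement network: `d` for the input, one afterwards. -/
def refineDims (d : ℕ) : ℕ → ℕ
  | 0 => d
  | _ + 1 => 1

/-- `L` rounds of set-based colour refinement, followed by the classification `cls`. -/
noncomputable def refineGNN (d L : ℕ) (cls : (Fin (refineDims d L) → ℝ) → Bool) : GNN d where
  kind := GNNKind.ACP
  L := L
  dims := refineDims d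
  dims_zero := rfl
  layer := fun ℓ _ => refineLayer (refineDims d ℓ)
  cls := cls

section
variable {d L : ℕ} {cls : (Fin (refineDims d L) → ℝ) → Bool}

/-- Equal labels after a round mean equal labels before it, and the same sets of earlier labels
among neighbours and among non-neighbours. -/
theorem labelAt_succ_eq {G G' : LGraph d} {v : Fin G.n} {v' : Fin G'.n} {ℓ : ℕ} (hℓ : ℓ < L)
    (h : (refineGNN d L cls).labelAt G (ℓ + 1) v = (refineGNN d L cls).labelAt G' (ℓ + 1) v') :
    (refineGNN d L cls).labelAt G ℓ v = (refineGNN d L cls).labelAt G' ℓ v' ∧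
    (∀ x, (∃ w, G.adj v w ∧ (refineGNN d L cls).labelAt G ℓ w = x) ↔
      ∃ w, G'.adj v' w ∧ (refineGNN d L cls).labelAt G' ℓ w = x) ∧
    (∀ x, (∃ w, (¬ G.adj v w ∧ w ≠ v) ∧ (refineGNN d L cls).labelAt G ℓ w = x) ↔
      ∃ w, (¬ G'.adj v' w ∧ w ≠ v') ∧ (refineGNN d L cls).labelAt G' ℓ w = x) := by
  have hL : ℓ < (refineGNN d L cls).L := hℓ
  simp only [GNN.labelAt, dif_pos hL] at h
  have h' := (tripleCode _).injective h
  have h0 := congrArg (fun p => p.1) h'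
  have h1 := congrArg (fun p => p.2.1) h'
  have h2 := congrArg (fun p => p.2.2) h'
  have h1' := setAgg_eq_iff.1 h1
  have h2' := setAgg_eq_iff.1 h2
  have hnbrs : ∀ (H : LGraph d) (u w : Fin H.n), w ∈ (H.nbrs u).val ↔ H.adj u w := by
    simp [LGraph.nbrs]
  have hconbrs : ∀ (H : LGraph d) (u w : Fin H.n),
      w ∈ ((refineGNN d L cls).auxSet H u).val ↔ ¬ H.adj u w ∧ w ≠ u := by
    simp [GNN.auxSet, refineGNN, LGraph.conbrs]
  refine ⟨h0, fun x => ?_, fun x => ?_⟩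
  · have hx := Multiset.mem_map.symm.trans ((h1' x).trans Multiset.mem_map)
    simp only [hnbrs] at hx
    exact hx
  · have hx := Multiset.mem_map.symm.trans ((h2' x).trans Multiset.mem_map)
    simp only [hconbrs] at hx
    exact hx

theorem labelAt_eq_of_le {G G' : LGraph d} {v : Fin G.n} {v' : Fin G'.n} {k ℓ : ℕ} (hk : k ≤ ℓ)
    (hℓ : ℓ ≤ L)
    (h : (refineGNN d L cls).labelAt G ℓ v = (refineGNN d L cls).labelAt G' ℓ v') :
    (refineGNN d L cls).labelAt G k v = (refineGNN d L cls).labelAt G' k v' := by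
  induction ℓ, hk using Nat.le_induction with
  | base => exact h
  | succ m _ ih => exact ih (by omega) (labelAt_succ_eq (by omega) h).1

/-! ### The two-pebble argument -/

variable (L cls) in
/-- The pebbled nodes of the two graphs agree on equality, on adjacency and on their labels after
`ℓ` refinement rounds. -/
def PebbleMatch (G G' : LGraph d) (ℓ : ℕ) (a : Bool → Fin G.n) (a' : Bool → Fin G'.n) : Prop :=
  (∀ b, (refineGNN d L cls).labelAt G ℓ (a b) = (refineGNN d L cls).labelAt G' ℓ (a' b)) ∧
  (∀ b c, G.adj (a b) (a c) ↔ G'.adj (a' b) (a' c)) ∧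
  (∀ b c, a b = a c ↔ a' b = a' c)

theorem PebbleMatch.symm {G G' : LGraph d} {ℓ : ℕ} {a : Bool → Fin G.n} {a' : Bool → Fin G'.n}
    (h : PebbleMatch L cls G G' ℓ a a') : PebbleMatch L cls G' G ℓ a' a :=
  ⟨fun b => (h.1 b).symm, fun b c => (h.2.1 b c).symm, fun b c => (h.2.2 b c).symm⟩

/-- Moving pebble `b` preserves a match as soon as the new nodes have equal labels and relate in
the same way to the other pebble. -/
theorem pebbleMatch_update {G G' : LGraph d} {ℓ : ℕ} {a : Bool → Fin G.n}
    {a' : Bool → Fin G'.n} {b : Bool} {w : Fin G.n} {w' : Fin G'.n}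
    (hother : (refineGNN d L cls).labelAt G ℓ (a !b) = (refineGNN d L cls).labelAt G' ℓ (a' !b))
    (hw : (refineGNN d L cls).labelAt G ℓ w = (refineGNN d L cls).labelAt G' ℓ w')
    (hadj : G.adj (a !b) w ↔ G'.adj (a' !b) w') (heq : w = (a !b) ↔ w' = (a' !b)) :
    PebbleMatch L cls G G' ℓ (Function.update a b w) (Function.update a' b w') := by
  have hadj' : G.adj w (a !b) ↔ G'.adj w' (a' !b) :=
    ⟨fun h => G'.symm _ _ (hadj.1 (G.symm _ _ h)), fun h => G.symm _ _ (hadj.2 (G'.symm _ _ h))⟩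
  have heq' : (a !b) = w ↔ (a' !b) = w' := by rw [eq_comm, heq, eq_comm]
  have hi := G.irrefl
  have hi' := G'.irrefl
  refine ⟨fun c => ?_, fun c e => ?_, fun c e => ?_⟩
  · cases b <;> cases c <;> simpa [Function.update]
  · cases b <;> cases c <;> cases e <;> simp_all [Function.update]
  · cases b <;> cases c <;> cases e <;> simp_all [Function.update]

/-- Any move of a pebble in the first graph can be answered in the second, at the price of one
refinement round. -/
theorem refine_response {G G' : LGraph d} {ℓ : ℕ} (hℓ : ℓ < L) {a : Bool → Fin G.n}
    {a' : Bool → Fin G'.n} (h : PebbleMatch L cls G G' (ℓ + 1) a a') (b : Bool) (w : Fin G.n) :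
    ∃ w', PebbleMatch L cls G G' ℓ (Function.update a b w) (Function.update a' b w') := by
  obtain ⟨h0, hN, hC⟩ := labelAt_succ_eq hℓ (h.1 !b)
  by_cases hw : w = (a !b)
  · subst hw
    refine ⟨(a' !b), pebbleMatch_update h0 h0 ?_ (by simp)⟩
    exact iff_of_false (G.irrefl _) (G'.irrefl _)
  by_cases hadj : G.adj (a !b) w
  · obtain ⟨w', hw', hl⟩ := (hN _).1 ⟨w, hadj, rfl⟩
    refine ⟨w', pebbleMatch_update h0 hl.symm (iff_of_true hadj hw') (iff_of_false hw ?_)⟩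
    rintro rfl
    exact G'.irrefl _ hw'
  · obtain ⟨w', hw', hl⟩ := (hC _).1 ⟨w, ⟨hadj, hw⟩, rfl⟩
    exact ⟨w', pebbleMatch_update h0 hl.symm (iff_of_false hadj hw'.1) (iff_of_false hw hw'.2)⟩

theorem sat_exC_one {G : LGraph d} {a : Bool → Fin G.n} {b : Bool} {φ : C2Form d} :
    G.toFOModel.sat a (C2Form.exC 1 b φ) ↔
      ∃ w : Fin G.n, G.toFOModel.sat (Function.update a b w) φ := by
  have : Finite {w : G.toFOModel.W // G.toFOModel.sat (Function.update a b w) φ} :=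
    inferInstanceAs (Finite {w : Fin G.n // G.toFOModel.sat (Function.update a b w) φ})
  change 1 ≤ Nat.card {w : G.toFOModel.W // G.toFOModel.sat (Function.update a b w) φ} ↔ _
  rw [Nat.one_le_iff_ne_zero, ← Nat.pos_iff_ne_zero, Nat.card_pos_iff, and_iff_left this,
    nonempty_subtype]
  rfl

/-- Matching pebble positions after `ℓ` rounds satisfy the same FO² formulas of quantifier depth
at most `ℓ`. -/
theorem refine_sat_iff {G G' : LGraph d} (φ : C2Form d) (hφ : φ.IsFO2) {ℓ : ℕ}
    (hdepth : φ.depth ≤ ℓ) (hℓ : ℓ ≤ L) {a : Bool → Fin G.n} {a' : Bool → Fin G'.n}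
    (h : PebbleMatch L cls G G' ℓ a a') : G.toFOModel.sat a φ ↔ G'.toFOModel.sat a' φ := by
  induction φ generalizing ℓ a a' with
  | prop p b =>
    -- The layer-`0` labels are the input labels, which record the unary predicates.
    have h0 := congrFun (labelAt_eq_of_le (Nat.zero_le ℓ) hℓ (h.1 b)) p
    change (if G.label (a b) p = true then (1 : ℝ) else 0) =
      if G'.label (a' b) p = true then (1 : ℝ) else 0 at h0
    change G.label (a b) p = true ↔ G'.label (a' b) p = true
    split_ifs at h0 <;> simp_all
  | edge b c => exact h.2.1 b c
  | eq b c => exact h.2.2 b c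
  | neg φ ih => exact not_congr (ih hφ hdepth hℓ h)
  | and φ ψ ih₁ ih₂ =>
    exact and_congr (ih₁ hφ.1 (le_of_max_le_left hdepth) hℓ h)
      (ih₂ hφ.2 (le_of_max_le_right hdepth) hℓ h)
  | exC k b φ ih =>
    obtain ⟨rfl, hφ⟩ := hφ
    have hdepth' : φ.depth + 1 ≤ ℓ := hdepth
    obtain ⟨m, rfl⟩ : ∃ m, ℓ = m + 1 := ⟨ℓ - 1, by omega⟩
    rw [sat_exC_one, sat_exC_one]
    constructor
    · rintro ⟨w, hw⟩
      obtain ⟨w', hm⟩ := refine_response (by omega) h b w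
      exact ⟨w', (ih hφ (by omega) (by omega) hm).1 hw⟩
    · rintro ⟨w', hw'⟩
      obtain ⟨w, hm⟩ := refine_response (by omega) h.symm b w'
      exact ⟨w, (ih hφ (by omega) (by omega) hm.symm).2 hw'⟩

/-- The labels do not depend on the classification function. -/
theorem labelAt_cls_irrel (cls' : (Fin (refineDims d L) → ℝ) → Bool) (G : LGraph d) (ℓ : ℕ) :
    (refineGNN d L cls).labelAt G ℓ = (refineGNN d L cls').labelAt G ℓ := by
  induction ℓ with
  | zero => rfl
  | succ m ih =>
    funext v
    simp only [GNN.labelAt, ih]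
    rfl

end

/-- `FO² ≤ GNN_s^AC+`: for every FO² classifier `φ(x)` of dimension `d`
(an FO² formula whose only free variable is `x`, represented by `false`) there exists a GNN
classifier `N_φ` in `GNN_s^AC+` (set-based, i.e. `1`-bounded, aggregations) of dimension `d`
such that for every pointed graph `(G,v)` of dimension `d`, `N_φ(G,v) = true` iff
`M_G ⊨ φ(v)`. -/
theorem fo2_le_gnn_s_acplus :
    ∀ (d : ℕ) (φ : C2Form d), φ.IsFO2 → φ.free ⊆ {false} →
      ∃ N : GNN d, N.kind = GNNKind.ACP ∧
        (∀ (ℓ : ℕ) (h : ℓ < N.L),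
          KBounded 1 (N.layer ℓ h).agg ∧ KBounded 1 (N.layer ℓ h).aux) ∧
        ∀ (G : LGraph d) (v : Fin G.n),
          N.eval G v = true ↔ (LGraph.toFOModel G).sat (fun _ => v) φ := by
  intro d φ hφ _
  let lab := (refineGNN d φ.depth fun _ => true).labelAt
  let cls : (Fin (refineDims d φ.depth) → ℝ) → Bool := fun x =>
    decide (∃ (G : LGraph d) (v : Fin G.n), lab G φ.depth v = x ∧
      G.toFOModel.sat (fun _ => v) φ)
  refine ⟨refineGNN d φ.depth cls, rfl, fun ℓ _ => ⟨kBounded_setAgg _, kBounded_setAgg _⟩,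
    fun G v => ?_⟩
  have heval : (refineGNN d φ.depth cls).eval G v = cls (lab G φ.depth v) := by
    change cls ((refineGNN d φ.depth cls).labelAt G φ.depth v) = _
    rw [labelAt_cls_irrel (fun _ => true)]
  rw [heval, decide_eq_true_iff]
  constructor
  · rintro ⟨G', v', hl, hs⟩
    refine (refine_sat_iff (L := φ.depth) (cls := fun _ => true) φ hφ le_rfl le_rfl ?_).1 hs
    exact ⟨fun _ => hl, fun _ _ => iff_of_false (G'.irrefl _) (G.irrefl _), fun _ _ => by simp⟩
  · exact fun hs => ⟨G, v, rfl, hs⟩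
end

section
/- For any finite pointed models (M,a) and (M',a') over the signature with finitely many unary predicates and one binary relation, and any ℓ,c ∈ ℕ: (M,a) ∼²_{ℓ,c} (M',a') if and only if a in M and a' in M' satisfy the same C2 formulas with one free variable of depth at most ℓ and counting rank at most c. Furthermore, any class C of pointed models closed under ∼²_{ℓ,c} is definable by a single C2 formula of depth at most ℓ and counting rank at most c with one free variable. -/
/-!
Both halves rest on a finite set of formulas `C2Form.basis c ℓ D`, which contains enough formulas
of depth at most `ℓ` and counting rank at most `c` to play the game (`D` records whether the second
pebble is on the board, that is, whether the variable `true` may occur free). It consists of the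
atoms over the available variables and, for `ℓ + 1`, of all formulas `∃_k v. χ` with `1 ≤ k ≤ c`,
where `χ` is the complete description (`C2Form.desc`) of a subset of the basis one level lower.

* If Duplicator wins, then by induction on formulas the two positions satisfy the same formulas of
  the fragment (`PebbleWin.sat_iff`): a set of `k` witnesses for `∃_k v. φ` is played as Spoiler's
  set, and Duplicator's answer consists of witnesses on the other side (`le_card_of_answer`).
* If the positions agree on the basis, then Duplicator wins (`pebbleWin_of_basis`): she splits
  Spoiler's set `U` according to which basis formulas of the lower level hold, and since each part
  has at most `c` elements, the formulas `∃_k v. χ` guarantee equally many elements of the same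
  kind in the other model (`exists_answer`).

As the basis is finite, a class closed under the game equivalence is defined by denying the
description of each of the finitely many subsets of the basis that is not realised in the class.
-/

attribute [local instance] Classical.propDecidable

/-! ### Choosing sets of prescribed size -/

/-- If `g` takes every value of `f` on `U` at least as often as `f` does on `U`, then some set `U'` has the
same size as `U` and only values that `f` takes on `U`. -/
lemma exists_answer {α β T : Type*} [Fintype β] (f : α → T) (g : β → T) (U : Finset α)
    (h : ∀ v ∈ U, (U.filter (f · = f v)).card ≤ (Finset.univ.filter (g · = f v)).card) :
    ∃ U' : Finset β, U'.card = U.card ∧ ∀ u' ∈ U', ∃ u ∈ U, f u = g u' := by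
  have h' : ∀ t, ∃ V : Finset β, t ∈ U.image f →
      V ⊆ Finset.univ.filter (g · = t) ∧ V.card = (U.filter (f · = t)).card := by
    intro t
    by_cases ht : t ∈ U.image f
    · obtain ⟨v, hv, rfl⟩ := Finset.mem_image.1 ht
      obtain ⟨V, hV⟩ := Finset.exists_subset_card_eq (h v hv)
      exact ⟨V, fun _ => hV⟩
    · exact ⟨∅, fun h => absurd h ht⟩
  choose V hV using h'
  refine ⟨(U.image f).biUnion V, ?_, ?_⟩
  · rw [Finset.card_biUnion, Finset.card_eq_sum_card_image f U]
    · exact Finset.sum_congr rfl fun t ht => (hV t ht).2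
    · intro s hs t ht hst
      rw [Function.onFun, Finset.disjoint_left]
      intro x hx hx'
      have h1 := (hV s hs).1 hx
      have h2 := (hV t ht).1 hx'
      simp only [Finset.mem_filter, Finset.mem_univ, true_and] at h1 h2
      exact hst (h1.symm.trans h2)
  · intro u' hu'
    obtain ⟨t, ht, hut⟩ := Finset.mem_biUnion.1 hu'
    have h1 := (hV t ht).1 hut
    simp only [Finset.mem_filter, Finset.mem_univ, true_and] at h1
    obtain ⟨u, hu, rfl⟩ := Finset.mem_image.1 ht
    exact ⟨u, hu, h1.symm⟩

/-- Duplicator's answer to a set of `k` witnesses of `P` is a set of `k` witnesses of `P'`. -/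
lemma le_card_of_answer {α β : Type*} [Fintype α] [Fintype β] {R : α → β → Prop} {P : α → Prop}
    {P' : β → Prop} {c k : ℕ}
    (hR : ∀ U : Finset α, U.Nonempty → U.card ≤ c →
      ∃ U' : Finset β, U'.card = U.card ∧ ∀ u' ∈ U', ∃ u ∈ U, R u u')
    (hP : ∀ u u', R u u' → P u → P' u') (hk : 1 ≤ k) (hkc : k ≤ c)
    (h : k ≤ Nat.card {u // P u}) : k ≤ Nat.card {u // P' u} := by
  rw [Nat.card_eq_fintype_card, Fintype.card_subtype] at h ⊢
  obtain ⟨U, hU, rfl⟩ := Finset.exists_subset_card_eq h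
  obtain ⟨U', hcard, hU'⟩ := hR U (Finset.card_pos.1 hk) hkc
  rw [← hcard]
  refine Finset.card_le_card fun u' hu' => ?_
  obtain ⟨u, hu, huu'⟩ := hU' u' hu'
  exact Finset.mem_filter.2 ⟨Finset.mem_univ _, hP u u' huu' (Finset.mem_filter.1 (hU hu)).2⟩

/-! ### Finite conjunctions and complete descriptions -/

namespace C2Form

/-- The conjunction of a list of formulas; the tautology `x = x` closes the list. -/
def conj {d : ℕ} : List (C2Form d) → C2Form d
  | [] => eq false false
  | φ :: L => and φ (conj L)

/-- Membership in the fragment of well-formed formulas of depth at most `ℓ` and counting rank at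
most `c`, whose free variables are `false` and, if `D = true`, also `true`. -/
structure InFrag {d : ℕ} (c ℓ : ℕ) (D : Bool) (φ : C2Form d) : Prop where
  isC2 : φ.IsC2
  free : ∀ v ∈ φ.free, v = true → D = true
  depth : φ.depth ≤ ℓ
  rank : φ.rank ≤ c

lemma InFrag.neg {d c ℓ : ℕ} {D : Bool} {φ : C2Form d} (h : φ.InFrag c ℓ D) :
    (C2Form.neg φ).InFrag c ℓ D := ⟨h.1, h.2, h.3, h.4⟩

lemma InFrag.and {d c ℓ : ℕ} {D : Bool} {φ ψ : C2Form d} (h : φ.InFrag c ℓ D)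
    (h' : ψ.InFrag c ℓ D) : (C2Form.and φ ψ).InFrag c ℓ D :=
  ⟨⟨h.1, h'.1⟩, fun v hv => hv.elim (h.2 v) (h'.2 v), max_le h.3 h'.3, max_le h.4 h'.4⟩

lemma InFrag.conj {d c ℓ : ℕ} {D : Bool} {L : List (C2Form d)}
    (h : ∀ φ ∈ L, φ.InFrag c ℓ D) : (conj L).InFrag c ℓ D := by
  induction L with
  | nil => exact ⟨trivial, by simp [C2Form.conj, C2Form.free], Nat.zero_le _, Nat.zero_le _⟩
  | cons φ L ih => exact (h φ (by simp)).and (ih fun ψ hψ => h ψ (by simp [hψ]))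

lemma sat_conj {d : ℕ} (M : FOModel d) (s : Bool → M.W) (L : List (C2Form d)) :
    M.sat s (conj L) ↔ ∀ φ ∈ L, M.sat s φ := by
  induction L with
  | nil => simp [conj, FOModel.sat]
  | cons φ L ih => simp [conj, FOModel.sat, ih]

/-- The formula stating that, among the formulas in `B`, exactly those in `S` hold. -/
noncomputable def desc {d : ℕ} (B S : Finset (C2Form d)) : C2Form d :=
  conj (B.toList.map fun φ => if φ ∈ S then φ else neg φ)

lemma InFrag.desc {d c ℓ : ℕ} {D : Bool} {B : Finset (C2Form d)} (S : Finset (C2Form d))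
    (h : ∀ φ ∈ B, φ.InFrag c ℓ D) : (desc B S).InFrag c ℓ D := by
  refine InFrag.conj fun ψ hψ => ?_
  obtain ⟨φ, hφ, rfl⟩ := List.mem_map.1 hψ
  have := h φ (Finset.mem_toList.1 hφ)
  split_ifs
  exacts [this, this.neg]

end C2Form

/-- The formulas in `B` that hold in `M` under the assignment `s`. -/
noncomputable def FOModel.typ {d : ℕ} (M : FOModel d) (B : Finset (C2Form d)) (s : Bool → M.W) :
    Finset (C2Form d) := B.filter (M.sat s)

lemma FOModel.sat_desc {d : ℕ} (M : FOModel d) (s : Bool → M.W) {B S : Finset (C2Form d)}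
    (hS : S ⊆ B) : M.sat s (C2Form.desc B S) ↔ M.typ B s = S := by
  rw [C2Form.desc, C2Form.sat_conj, FOModel.typ, Finset.ext_iff]
  simp only [List.mem_map, Finset.mem_toList, forall_exists_index, and_imp,
    forall_apply_eq_imp_iff₂, Finset.mem_filter]
  refine forall_congr' fun φ => ?_
  by_cases hφ : φ ∈ S
  · simp [hφ, hS hφ]
  · simp [hφ, FOModel.sat]

/-! ### The finite basis -/

namespace C2Form

/-- The variables interpreted by the pebbles on the board. -/
def vars (D : Bool) : Finset Bool := Finset.univ.filter fun v => v = true → D = true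

/-- All atomic formulas over the variables in `vars D`. -/
noncomputable def atoms (d : ℕ) (D : Bool) : Finset (C2Form d) :=
  (Finset.univ ×ˢ vars D).image (fun x => prop x.1 x.2) ∪
  (vars D ×ˢ vars D).image (fun x => edge x.1 x.2) ∪
  (vars D ×ˢ vars D).image (fun x => eq x.1 x.2)

/-- A finite set of formulas of depth at most `ℓ` and counting rank at most `c` that determines
the winner of the `ℓ`-round `c`-graded game; `D` tells whether the second pebble is placed. -/
noncomputable def basis {d : ℕ} (c : ℕ) : ℕ → Bool → Finset (C2Form d)
  | 0, D => atoms d D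
  | ℓ + 1, D => atoms d D ∪
      Finset.univ.biUnion fun b => (Finset.Icc 1 c).biUnion fun k =>
        (basis c ℓ (D || b)).powerset.image fun S => exC k b (desc (basis c ℓ (D || b)) S)

lemma atoms_subset_basis {d : ℕ} (c ℓ : ℕ) (D : Bool) : atoms d D ⊆ basis c ℓ D := by
  cases ℓ with
  | zero => exact subset_rfl
  | succ ℓ => exact Finset.subset_union_left

lemma exC_mem_basis {d c k ℓ : ℕ} {D b : Bool} (hk : 1 ≤ k) (hkc : k ≤ c)
    {S : Finset (C2Form d)} (hS : S ⊆ basis c ℓ (D || b)) :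
    exC k b (desc (basis c ℓ (D || b)) S) ∈ basis c (ℓ + 1) D :=
  Finset.mem_union_right _ <| Finset.mem_biUnion.2 ⟨b, Finset.mem_univ _, Finset.mem_biUnion.2
    ⟨k, Finset.mem_Icc.2 ⟨hk, hkc⟩, Finset.mem_image_of_mem _ (Finset.mem_powerset.2 hS)⟩⟩

lemma InFrag.of_mem_atoms {d c ℓ : ℕ} {D : Bool} {φ : C2Form d} (h : φ ∈ atoms d D) :
    φ.InFrag c ℓ D := by
  simp only [atoms, vars, Finset.mem_union, Finset.mem_image, Finset.mem_product,
    Finset.mem_filter, Finset.mem_univ, true_and, Prod.exists] at h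
  rcases h with (⟨p, v, hv, rfl⟩ | ⟨v, w, ⟨hv, hw⟩, rfl⟩) | ⟨v, w, ⟨hv, hw⟩, rfl⟩ <;>
    refine ⟨trivial, ?_, Nat.zero_le _, Nat.zero_le _⟩ <;> simp [C2Form.free] <;> tauto

lemma InFrag.of_mem_basis {d c ℓ : ℕ} {D : Bool} {φ : C2Form d} (h : φ ∈ basis c ℓ D) :
    φ.InFrag c ℓ D := by
  induction ℓ generalizing D φ with
  | zero => exact .of_mem_atoms h
  | succ ℓ ih =>
    rcases Finset.mem_union.1 h with h | h
    · exact .of_mem_atoms h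
    · simp only [Finset.mem_biUnion, Finset.mem_univ, true_and, Finset.mem_Icc,
        Finset.mem_image] at h
      obtain ⟨b, k, ⟨hk, hkc⟩, S, -, rfl⟩ := h
      have hd := InFrag.desc S (fun φ hφ => ih (D := D || b) (φ := φ) hφ)
      refine ⟨⟨hk, hd.1⟩, ?_, Nat.succ_le_succ hd.3, max_le hkc hd.4⟩
      rintro v ⟨hv, hvb⟩ rfl
      have := hd.2 _ hv rfl
      cases b <;> simp_all

end C2Form

/-! ### Assignments and pebble positions -/

/-- The assignment `s` maps the variable of each placed pebble to the position given by `q₁`, `q₂`;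
its value at the variable of an unplaced pebble is arbitrary. -/
def Compat {α : Type*} (q₁ : α) (q₂ : Option α) (s : Bool → α) : Prop :=
  s false = q₁ ∧ ∀ x ∈ q₂, s true = x

lemma Compat.update_fst {α β : Type*} {p₁ : α × β} {p₂ : Option (α × β)} {s : Bool → α}
    (h : Compat p₁.1 (p₂.map Prod.fst) s) (i : Bool) (x : α × β) :
    Compat (updCfg p₁ p₂ i x).1.1 ((updCfg p₁ p₂ i x).2.map Prod.fst)
      (Function.update s i x.1) := by
  cases i
  · exact ⟨by simp [updCfg], fun y hy => by simpa using h.2 y hy⟩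
  · exact ⟨by simpa [updCfg] using h.1, by simp [updCfg]⟩

lemma Compat.update_snd {α β : Type*} {p₁ : α × β} {p₂ : Option (α × β)} {s : Bool → β}
    (h : Compat p₁.2 (p₂.map Prod.snd) s) (i : Bool) (x : α × β) :
    Compat (updCfg p₁ p₂ i x).1.2 ((updCfg p₁ p₂ i x).2.map Prod.snd)
      (Function.update s i x.2) := by
  cases i
  · exact ⟨by simp [updCfg], fun y hy => by simpa using h.2 y hy⟩
  · exact ⟨by simpa [updCfg] using h.1, by simp [updCfg]⟩

lemma isSome_updCfg {α β : Type*} (p₁ : α × β) (p₂ : Option (α × β)) (i : Bool) (x : α × β) :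
    (updCfg p₁ p₂ i x).2.isSome = (p₂.isSome || i) := by
  cases i <;> simp [updCfg]

/-- The positions form a partial isomorphism iff they satisfy the same atoms. -/
lemma pIso_iff_atoms {d : ℕ} {M M' : FOModel d} {p₁ : M.W × M'.W} {p₂ : Option (M.W × M'.W)}
    {s : Bool → M.W} {s' : Bool → M'.W} (hs : Compat p₁.1 (p₂.map Prod.fst) s)
    (hs' : Compat p₁.2 (p₂.map Prod.snd) s') :
    PIso M M' p₁ p₂ ↔ ∀ φ ∈ C2Form.atoms d p₂.isSome, (M.sat s φ ↔ M'.sat s' φ) := by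
  obtain ⟨h1, h2⟩ := hs
  obtain ⟨h1', h2'⟩ := hs'
  simp only [C2Form.atoms, C2Form.vars, Finset.mem_union, Finset.mem_image, Finset.mem_product,
    Finset.mem_filter, Finset.mem_univ, true_and, Prod.exists]
  constructor
  · rintro ⟨⟨ha, hb⟩, hc⟩ φ
      ((⟨q, v, hv, rfl⟩ | ⟨v, w, ⟨hv, hw⟩, rfl⟩) | ⟨v, w, ⟨hv, hw⟩, rfl⟩)
    all_goals rcases p₂ with _ | ⟨x, x'⟩
    all_goals try cases v
    all_goals try cases w
    all_goals simp_all [FOModel.sat]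
    all_goals grind
  · intro h
    have hp : ∀ q v, (v = true → p₂.isSome = true) → (M.val (s v) q ↔ M'.val (s' v) q) :=
      fun q v hv => h _ (.inl (.inl ⟨q, v, hv, rfl⟩))
    have he : ∀ v w, (v = true → p₂.isSome = true) → (w = true → p₂.isSome = true) →
        (M.E (s v) (s w) ↔ M'.E (s' v) (s' w)) :=
      fun v w hv hw => h _ (.inl (.inr ⟨v, w, ⟨hv, hw⟩, rfl⟩))
    have hq : ∀ v w, (v = true → p₂.isSome = true) → (w = true → p₂.isSome = true) →
        (s v = s w ↔ s' v = s' w) :=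
      fun v w hv hw => h _ (.inr ⟨v, w, ⟨hv, hw⟩, rfl⟩)
    clear h
    rcases p₂ with _ | ⟨x, x'⟩
    · simp_all [PIso]
    · simp_all [PIso]

/-! ### The game and the logic -/

lemma PebbleWin.pIso {d c ℓ : ℕ} {M M' : FOModel d} {p₁ : M.W × M'.W}
    {p₂ : Option (M.W × M'.W)} (h : PebbleWin c M M' ℓ p₁ p₂) : PIso M M' p₁ p₂ := by
  cases ℓ with
  | zero => exact h
  | succ ℓ => exact h.1

/-- Positions from which Duplicator wins satisfy the same formulas of the fragment. -/
lemma PebbleWin.sat_iff {d c : ℕ} {M M' : FOModel d} {φ : C2Form d} {ℓ : ℕ} {p₁ : M.W × M'.W}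
    {p₂ : Option (M.W × M'.W)} (h : PebbleWin c M M' ℓ p₁ p₂) {s : Bool → M.W}
    {s' : Bool → M'.W} (hs : Compat p₁.1 (p₂.map Prod.fst) s)
    (hs' : Compat p₁.2 (p₂.map Prod.snd) s') (hφ : φ.InFrag c ℓ p₂.isSome) :
    M.sat s φ ↔ M'.sat s' φ := by
  have hat := (pIso_iff_atoms hs hs').1 h.pIso
  simp only [C2Form.atoms, C2Form.vars, Finset.mem_union, Finset.mem_image, Finset.mem_product,
    Finset.mem_filter, Finset.mem_univ, true_and, Prod.exists] at hat
  induction φ generalizing ℓ p₁ p₂ s s' with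
  | prop q v => exact hat _ (.inl (.inl ⟨q, v, hφ.free v rfl, rfl⟩))
  | edge v w =>
    exact hat _ (.inl (.inr ⟨v, w, ⟨hφ.free v (.inl rfl), hφ.free w (.inr rfl)⟩, rfl⟩))
  | eq v w =>
    exact hat _ (.inr ⟨v, w, ⟨hφ.free v (.inl rfl), hφ.free w (.inr rfl)⟩, rfl⟩)
  | neg φ ih => exact not_congr (ih h hs hs' ⟨hφ.1, hφ.2, hφ.3, hφ.4⟩ hat)
  | and φ ψ ih ih' =>
    exact and_congr
      (ih h hs hs' ⟨hφ.1.1, fun v hv => hφ.2 v (.inl hv), (le_max_left _ _).trans hφ.3,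
        (le_max_left _ _).trans hφ.4⟩ hat)
      (ih' h hs hs' ⟨hφ.1.2, fun v hv => hφ.2 v (.inr hv), (le_max_right _ _).trans hφ.3,
        (le_max_right _ _).trans hφ.4⟩ hat)
  | exC k b φ ih =>
    cases ℓ with
    | zero => exact absurd hφ.3 (Nat.not_succ_le_zero _)
    | succ ℓ =>
      have := M.fintype
      have := M'.fintype
      have hsub : φ.InFrag c ℓ (p₂.isSome || b) := by
        refine ⟨hφ.1.2, ?_, Nat.le_of_succ_le_succ hφ.3, (le_max_right _ _).trans hφ.4⟩
        rintro v hv rfl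
        cases b
        · simpa using hφ.2 true ⟨hv, by simp⟩ rfl
        · simp
      have hkc : k ≤ c := (le_max_left _ _).trans hφ.4
      have key : ∀ u u', PebbleWin c M M' ℓ (updCfg p₁ p₂ b (u, u')).1
          (updCfg p₁ p₂ b (u, u')).2 →
          (M.sat (Function.update s b u) φ ↔ M'.sat (Function.update s' b u') φ) := by
        intro u u' hw
        have c1 := hs.update_fst b (u, u')
        have c2 := hs'.update_snd b (u, u')
        refine ih hw c1 c2 (by rwa [isSome_updCfg]) ?_
        have := (pIso_iff_atoms c1 c2).1 hw.pIso
        simpa only [C2Form.atoms, C2Form.vars, Finset.mem_union, Finset.mem_image,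
          Finset.mem_product, Finset.mem_filter, Finset.mem_univ, true_and, Prod.exists] using this
      exact ⟨le_card_of_answer (h.2 b).1 (fun u u' hw => (key u u' hw).1) hφ.1.1 hkc,
        le_card_of_answer (R := fun u' u => PebbleWin c M M' ℓ (updCfg p₁ p₂ b (u, u')).1
          (updCfg p₁ p₂ b (u, u')).2) (h.2 b).2 (fun u' u hw => (key u u' hw).2) hφ.1.1 hkc⟩

/-- If every basis formula of level `ℓ + 1` true in `M` is true in `M'`, then every set `U` of at
most `c` elements of `M` is answered by a set of the same size in `M'` that realises only types of
level `ℓ` realised in `U`. -/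
lemma exists_typ_answer {d c ℓ : ℕ} {M M' : FOModel d} {D : Bool} {s : Bool → M.W}
    {s' : Bool → M'.W} (b : Bool)
    (h : ∀ φ ∈ C2Form.basis c (ℓ + 1) D, M.sat s φ → M'.sat s' φ)
    (U : Finset M.W) (hU : U.card ≤ c) :
    ∃ U' : Finset M'.W, U'.card = U.card ∧ ∀ u' ∈ U', ∃ u ∈ U,
      M.typ (C2Form.basis c ℓ (D || b)) (Function.update s b u) =
        M'.typ (C2Form.basis c ℓ (D || b)) (Function.update s' b u') := by
  have := M.fintype
  have := M'.fintype
  refine exists_answer (fun u => M.typ (C2Form.basis c ℓ (D || b)) (Function.update s b u))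
    (fun u' => M'.typ (C2Form.basis c ℓ (D || b)) (Function.update s' b u')) U fun u hu => ?_
  obtain ⟨t, hut⟩ : ∃ t, M.typ (C2Form.basis c ℓ (D || b)) (Function.update s b u) = t := ⟨_, rfl⟩
  have htB : t ⊆ C2Form.basis c ℓ (D || b) := hut ▸ Finset.filter_subset _ _
  simp only [hut]
  have hpos : 1 ≤ (U.filter fun u =>
      M.typ (C2Form.basis c ℓ (D || b)) (Function.update s b u) = t).card :=
    Finset.card_pos.2 ⟨u, Finset.mem_filter.2 ⟨hu, hut⟩⟩
  have := h _ (C2Form.exC_mem_basis hpos ((Finset.card_filter_le _ _).trans hU) htB)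
  simp only [FOModel.sat, FOModel.sat_desc _ _ htB, Nat.card_eq_fintype_card,
    Fintype.card_subtype] at this
  convert this (Finset.card_le_card (Finset.filter_subset_filter _ (Finset.subset_univ _)))

lemma FOModel.typ_eq_iff {d : ℕ} {M M' : FOModel d} {B : Finset (C2Form d)} {s : Bool → M.W}
    {s' : Bool → M'.W} : M.typ B s = M'.typ B s' ↔ ∀ φ ∈ B, (M.sat s φ ↔ M'.sat s' φ) := by
  simp only [FOModel.typ, Finset.filter_inj']

/-- Duplicator wins from positions that satisfy the same basis formulas. -/
lemma pebbleWin_of_basis {d c ℓ : ℕ} {M M' : FOModel d} {p₁ : M.W × M'.W}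
    {p₂ : Option (M.W × M'.W)} {s : Bool → M.W} {s' : Bool → M'.W}
    (hs : Compat p₁.1 (p₂.map Prod.fst) s) (hs' : Compat p₁.2 (p₂.map Prod.snd) s')
    (h : ∀ φ ∈ C2Form.basis c ℓ p₂.isSome, (M.sat s φ ↔ M'.sat s' φ)) :
    PebbleWin c M M' ℓ p₁ p₂ := by
  have hiso := (pIso_iff_atoms hs hs').2 fun φ hφ => h φ (C2Form.atoms_subset_basis _ _ _ hφ)
  induction ℓ generalizing p₁ p₂ s s' with
  | zero => exact hiso
  | succ ℓ ih =>
    refine ⟨hiso, fun i => ?_⟩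
    have key : ∀ u u', M.typ (C2Form.basis c ℓ (p₂.isSome || i)) (Function.update s i u) =
        M'.typ (C2Form.basis c ℓ (p₂.isSome || i)) (Function.update s' i u') →
        PebbleWin c M M' ℓ (updCfg p₁ p₂ i (u, u')).1 (updCfg p₁ p₂ i (u, u')).2 := by
      intro u u' ht
      have c1 := hs.update_fst i (u, u')
      have c2 := hs'.update_snd i (u, u')
      rw [← isSome_updCfg p₁ p₂ i (u, u'), FOModel.typ_eq_iff] at ht
      exact ih c1 c2 ht ((pIso_iff_atoms c1 c2).2 fun φ hφ =>
        ht φ (C2Form.atoms_subset_basis _ _ _ hφ))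
    constructor
    · intro U _ hU
      obtain ⟨U', hc, hU'⟩ := exists_typ_answer i (fun φ hφ => (h φ hφ).1) U hU
      exact ⟨U', hc, fun u' hu' => (hU' u' hu').imp fun u hu => ⟨hu.1, key u u' hu.2⟩⟩
    · intro U _ hU
      obtain ⟨U', hc, hU'⟩ := exists_typ_answer i (fun φ hφ => (h φ hφ).2) U hU
      exact ⟨U', hc, fun u hu => (hU' u hu).imp fun u' hu' => ⟨hu'.1, key u u' hu'.2.symm⟩⟩

/-- For any finite pointed models `(M,a)` and `(M',a')` over the signature
with finitely many unary predicates and one binary relation, and any `ℓ,c ∈ ℕ`: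
`(M,a) ∼²_{ℓ,c} (M',a')` iff `a` in `M` and `a'` in `M'` satisfy the same C² formulas with one
free variable of depth at most `ℓ` and counting rank at most `c`. Furthermore, any class `C`
of pointed models closed under `∼²_{ℓ,c}` is definable by a single C² formula of depth at most
`ℓ` and counting rank at most `c` with one free variable. -/
theorem c2_pebble_characterisation :
    ∀ (d ℓ c : ℕ),
      (∀ (M M' : FOModel d) (a : M.W) (a' : M'.W),
        PebbleWin c M M' ℓ (a, a') none ↔
          ∀ φ : C2Form d, φ.IsC2 → φ.free ⊆ {false} → φ.depth ≤ ℓ → φ.rank ≤ c →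
            (M.sat (fun _ => a) φ ↔ M'.sat (fun _ => a') φ)) ∧
      (∀ C : (M : FOModel d) → M.W → Prop,
        (∀ (M : FOModel d) (a : M.W) (M' : FOModel d) (a' : M'.W),
          C M a → PebbleWin c M M' ℓ (a, a') none → C M' a') →
        ∃ φ : C2Form d, φ.IsC2 ∧ φ.free ⊆ {false} ∧ φ.depth ≤ ℓ ∧ φ.rank ≤ c ∧
          ∀ (M : FOModel d) (a : M.W), M.sat (fun _ => a) φ ↔ C M a) := by
  intro d ℓ c
  have hfree : ∀ φ : C2Form d, φ.free ⊆ {false} ↔ ∀ v ∈ φ.free, v = true → false = true := by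
    intro φ
    refine forall_congr' fun v => forall_congr' fun _ => ?_
    cases v <;> simp
  have hcompat : ∀ {α : Type} (a : α), Compat a none fun _ => a :=
    fun a => ⟨rfl, fun x hx => nomatch hx⟩
  have hwin : ∀ (M M' : FOModel d) (a : M.W) (a' : M'.W),
      M.typ (C2Form.basis c ℓ false) (fun _ => a) = M'.typ (C2Form.basis c ℓ false) (fun _ => a') →
      PebbleWin c M M' ℓ (a, a') none := fun M M' a a' h =>
    pebbleWin_of_basis (hcompat a) (hcompat a') (FOModel.typ_eq_iff.1 h)
  refine ⟨fun M M' a a' => ⟨fun h φ h1 h2 h3 h4 => ?_, fun h => ?_⟩, fun C hC => ?_⟩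
  · exact h.sat_iff (hcompat a) (hcompat a') ⟨h1, (hfree φ).1 h2, h3, h4⟩
  · refine hwin M M' a a' (FOModel.typ_eq_iff.2 fun φ hφ => ?_)
    have := C2Form.InFrag.of_mem_basis hφ
    exact h φ this.1 ((hfree φ).2 this.2) this.3 this.4
  · -- The defining formula denies every description that is not realised in `C`.
    let B : Finset (C2Form d) := C2Form.basis c ℓ false
    let L : List (C2Form d) := ((B.powerset.filter fun S =>
      ¬ ∃ (M : FOModel d) (a : M.W), C M a ∧ M.typ B (fun _ => a) = S).toList.map
        fun S => C2Form.neg (C2Form.desc B S))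
    have hL : (C2Form.conj L).InFrag c ℓ false := by
      refine .conj fun φ hφ => ?_
      obtain ⟨S, -, rfl⟩ := List.mem_map.1 hφ
      exact (C2Form.InFrag.desc S fun φ hφ => .of_mem_basis hφ).neg
    refine ⟨C2Form.conj L, hL.1, (hfree _).2 hL.2, hL.3, hL.4, fun M a => ?_⟩
    rw [C2Form.sat_conj]
    constructor
    · intro h
      by_contra hCa
      have hsub : M.typ B (fun _ => a) ⊆ B := Finset.filter_subset _ _
      refine h _ (List.mem_map.2 ⟨M.typ B (fun _ => a), ?_, rfl⟩) ((M.sat_desc _ hsub).2 rfl)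
      rw [Finset.mem_toList, Finset.mem_filter, Finset.mem_powerset]
      exact ⟨hsub, fun ⟨M', a', hC', ht⟩ => hCa (hC M' a' M a hC' (hwin M' M a' a ht))⟩
    · intro hCa φ hφ
      obtain ⟨S, hS, rfl⟩ := List.mem_map.1 hφ
      rw [Finset.mem_toList, Finset.mem_filter, Finset.mem_powerset] at hS
      exact fun hsat => hS.2 ⟨M, a, hCa, (M.sat_desc _ hS.1).1 hsat⟩
end
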